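/- For every countable ordinal λ with λ ≥ 1, there exists a countable constructible graph whose construction time is exactly λ. -/

import Mathlib

universe u

/-- `y` dominates `x` in `G`: `y ≠ x` and the closed neighbourhood of `x` is contained
in the closed neighbourhood of `y`. -/
def Dominates {V : Type u} (G : SimpleGraph V) (y x : V) : Prop :=
  y ≠ x ∧ ∀ z : V, (z = x ∨ G.Adj x z) → (z = y ∨ G.Adj y z)

/-- `y` dominates `x` in the subgraph of `G` induced by `S`. -/
def DominatesOn {V : Type u} (G : SimpleGraph V) (S : Set V) (y x : V) : Prop :=
  y ≠ x ∧ ∀ z ∈ S, (z = x ∨ G.Adj x z) → (z = y ∨ G.Adj y z)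

/-- `r` (a well-order on `V`) is a construction order for `G`: every non-root vertex `x`
(i.e. one with a strictly earlier vertex) is dominated, in the subgraph induced by the
vertices up to and including `x`, by some strictly earlier vertex. -/
def ConstructionOrderSpec {V : Type u} (G : SimpleGraph V) (r : V → V → Prop) : Prop :=
  ∀ x : V, (∃ y, r y x) → ∃ y, r y x ∧ DominatesOn G {z | r z x ∨ z = x} y x

/-- A graph is constructible if it has a construction order. -/
def Constructible {V : Type u} (G : SimpleGraph V) : Prop :=
  ∃ r : V → V → Prop, IsWellOrder V r ∧ ConstructionOrderSpec G r

/-- The set of ordinals arising as the order type of some construction order of `G`.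
The construction time of `G` is the least element of this set. -/
def constructionTimes {V : Type u} (G : SimpleGraph V) : Set Ordinal.{u} :=
  {o | ∃ (r : V → V → Prop) (_ : IsWellOrder V r), ConstructionOrderSpec G r ∧ Ordinal.type r = o}

/-!
The lower bound comes from a *ladder*: two cliques `left i` and `right i`, joined by the rungs
`left i — right i`, where no vertex dominates an end of rung `i` within rungs `i < j` together.
Whichever end of rung `i` comes later in a construction order therefore precedes the later end of
rung `j`, so the order type is at least that of the index set. Two hubs and one key per rung make
the ladder constructible: `key i` is dominated by one hub as long as `left i` is missing, `left i`
by the other as long as `right i` is missing, and `right i` by `key i` as long as no right end of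
a rung after `i` is present.

For an infinite ordinal `ω * q + n`, put first the hubs and the keys and left ends of the last `n`
rungs, then the blocks `key i, left i, right i` of the first `ω * q` rungs, and finally the right
ends of the last `n` rungs. This has order type `(2 + 2 * n) + (3 * (ω * q) + n) = ω * q + n`.
For a finite ordinal `n`, every enumeration of the `n` vertices of a complete graph is a
construction order.
-/

open Cardinal Ordinal

theorem natCast_add_natCast_mul_omega0_mul {q : Ordinal.{u}} (hq : q ≠ 0) (k : ℕ) {m : ℕ}
    (hm : 0 < m) : k + m * (ω * q) = ω * q := by
  have omega0_le : ω ≤ ω * q := le_mul_of_one_le_right' (Order.one_le_iff_ne_zero.2 hq)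
  rw [← mul_assoc, natCast_mul_omega0 hm, natCast_add_of_omega0_le omega0_le]

section ConstructionOrder

variable {V α : Type u} {G : SimpleGraph V} {s : V → V → Prop}

theorem DominatesOn.mono {S T : Set V} {x y : V} (h : DominatesOn G T y x) (hST : S ⊆ T) :
    DominatesOn G S y x :=
  ⟨h.1, fun z hz => h.2 z (hST hz)⟩

theorem DominatesOn.of_compl_of_forall_rel [IsStrictOrder V s] {T : Set V} {x y : V}
    (h : DominatesOn G Tᶜ y x) (hT : ∀ v ∈ T, s x v) :
    DominatesOn G {z | s z x ∨ z = x} y x := by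
  refine h.mono ?_
  rintro z (hzx | rfl) hz
  · exact asymm_of s hzx (hT z hz)
  · exact irrefl_of s z (hT z hz)

theorem ConstructionOrderSpec.exists_rel_of_forall_not_dominatesOn [Std.Trichotomous s]
    (hs : ConstructionOrderSpec G s) {T : Set V} {a b : V} (hba : s b a)
    (hT : ∀ v, ¬ DominatesOn G T v a) : ∃ c ∈ T, s a c := by
  by_contra! hlast
  obtain ⟨v, -, hv⟩ := hs a ⟨b, hba⟩
  refine hT v (hv.mono fun c hc => ?_)
  rcases trichotomous_of s c a with hca | hca | hac
  · exact Or.inl hca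
  · exact Or.inr hca
  · exact absurd hac (hlast c hc)

theorem ConstructionOrderSpec.type_le_of_forall_not_dominatesOn [IsWellOrder V s]
    (hs : ConstructionOrderSpec G s) (r : α → α → Prop) [IsWellOrder α r] {F : α → Set V}
    (hfin : ∀ i, (F i).Finite) (hnt : ∀ i, (F i).Nontrivial)
    (hF : ∀ i j, r i j → ∀ a ∈ F i, ∀ v, ¬ DominatesOn G (F i ∪ F j) v a) :
    type r ≤ type s := by
  have exists_last (i : α) : ∃ a ∈ F i, ∀ b ∈ F i, b = a ∨ s b a := by
    classical
    let := linearOrderOfSTO s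
    exact Set.exists_max_image (F i) id (hfin i) (hnt i).nonempty
  choose last last_mem eq_or_rel_last using exists_last
  refine (RelEmbedding.ofMonotone last fun i j hij => ?_).ordinal_type_le
  obtain ⟨b, hb, hne⟩ := (hnt i).exists_ne (last i)
  have hb_last : s b (last i) := (eq_or_rel_last i b hb).resolve_left hne
  obtain ⟨c, hci | hcj, hc⟩ :=
    hs.exists_rel_of_forall_not_dominatesOn hb_last (hF i j hij _ (last_mem i))
  · rcases eq_or_rel_last i c hci with rfl | hc'
    · exact absurd hc (irrefl_of s _)
    · exact absurd hc (asymm_of s hc')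
  · rcases eq_or_rel_last j c hcj with rfl | hc'
    · exact hc
    · exact trans_of s hc hc'

theorem constructible_of_mem_constructionTimes {o : Ordinal} (h : o ∈ constructionTimes G) :
    Constructible G :=
  let ⟨r, hr, hspec, _⟩ := h
  ⟨r, hr, hspec⟩

theorem mk_eq_card_of_mem_constructionTimes {o : Ordinal} (h : o ∈ constructionTimes G) :
    #V = o.card := by
  obtain ⟨r, _, -, rfl⟩ := h
  exact (card_type r).symm

theorem constructionOrderSpec_top (r : V → V → Prop) [Std.Irrefl r] :
    ConstructionOrderSpec (⊤ : SimpleGraph V) r := by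
  rintro x ⟨y, hyx⟩
  exact ⟨y, hyx, ne_of_irrefl hyx, fun z _ _ => (eq_or_ne z y).imp_right Ne.symm⟩

theorem isLeast_constructionTimes_top [Finite V] (r : V → V → Prop) [IsWellOrder V r] :
    IsLeast (constructionTimes (⊤ : SimpleGraph V)) (type r) := by
  have := Fintype.ofFinite V
  refine ⟨⟨r, inferInstance, constructionOrderSpec_top r, rfl⟩, ?_⟩
  rintro _ ⟨s, _, -, rfl⟩
  rw [type_fintype, type_fintype]

end ConstructionOrder

/-- The vertices of the ladder graph with rungs indexed by `α`: two hubs and, for each rung `i`,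
its ends `left i` and `right i` and its key `key i`. -/
inductive LadderVertex (α : Type u) : Type u
  | leftHub
  | rightHub
  | left (i : α)
  | right (i : α)
  | key (i : α)

namespace LadderVertex

variable {α : Type u}

/-- The edges of the ladder graph, up to the symmetrization and the removal of loops performed by
`SimpleGraph.fromRel`. The order `r` of the rungs enters only through the keys: `key i`
opens rung `i` and reaches back along the right side to all earlier rungs. -/
def Edge (r : α → α → Prop) : LadderVertex α → LadderVertex α → Prop
  | leftHub, rightHub => True
  | leftHub, left _ => True
  | leftHub, key _ => True
  | rightHub, right _ => True
  | rightHub, key _ => True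
  | left _, left _ => True
  | right _, right _ => True
  | key _, key _ => True
  | left i, right j => i = j
  | key i, left j => i = j
  | key i, right k => k = i ∨ r k i
  | _, _ => False

/-- The ladder graph on rungs ordered by `r`; its construction time is at least `type r`. -/
def ladderGraph (r : α → α → Prop) : SimpleGraph (LadderVertex α) :=
  SimpleGraph.fromRel (Edge r)

/-- The two ends of rung `i`. -/
def rung (i : α) : Set (LadderVertex α) :=
  {left i, right i}

section LowerBound

variable (r : α → α → Prop)

theorem not_dominatesOn_rung_union_rung [Std.Asymm r] {i j : α} (hij : r i j) {a : LadderVertex α}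
    (ha : a ∈ rung i) (v : LadderVertex α) :
    ¬ DominatesOn (ladderGraph r) (rung i ∪ rung j) v a := by
  have hne : i ≠ j := ne_of_irrefl hij
  have hji : ¬ r j i := asymm_of r hij
  rintro ⟨hva, hdom⟩
  have at_left := hdom (left i)
  have at_right := hdom (right i)
  rcases ha with rfl | rfl
  · have at_next_left := hdom (left j)
    cases v <;> simp_all [ladderGraph, Edge, rung]
  · have at_next_right := hdom (right j)
    cases v <;> simp_all [ladderGraph, Edge, rung]

theorem type_le_of_mem_constructionTimes_ladderGraph [IsWellOrder α r] {o : Ordinal}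
    (ho : o ∈ constructionTimes (ladderGraph r)) : type r ≤ o := by
  obtain ⟨s, _, hs, rfl⟩ := ho
  exact hs.type_le_of_forall_not_dominatesOn r (F := rung) (fun i => Set.toFinite {left i, right i})
    (fun i => Set.nontrivial_pair (by simp))
    (fun i j hij a ha => not_dominatesOn_rung_union_rung r hij ha)

end LowerBound

section Domination

variable (r : α → α → Prop)

theorem dominatesOn_leftHub_rightHub :
    DominatesOn (ladderGraph r) (Set.range right)ᶜ leftHub rightHub := by
  refine ⟨by simp, fun v hv hadj => ?_⟩
  cases v <;> simp_all [ladderGraph, Edge]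

theorem dominatesOn_leftHub_left (i : α) :
    DominatesOn (ladderGraph r) {right i}ᶜ leftHub (left i) := by
  refine ⟨by simp, fun v hv hadj => ?_⟩
  cases v <;> simp_all [ladderGraph, Edge]

theorem dominatesOn_rightHub_key (i : α) :
    DominatesOn (ladderGraph r) {left i}ᶜ rightHub (key i) := by
  refine ⟨by simp, fun v hv hadj => ?_⟩
  cases v <;> simp_all [ladderGraph, Edge]

theorem dominatesOn_key_right [Std.Trichotomous r] (i : α) :
    DominatesOn (ladderGraph r) (right '' {k | r i k})ᶜ (key i) (right i) := by
  refine ⟨by simp, fun v hv hadj => ?_⟩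
  have eq_or_rel {k : α} (hk : ¬ r i k) : k = i ∨ r k i := by
    rcases trichotomous_of r k i with h | h | h
    exacts [Or.inr h, Or.inl h, absurd h hk]
  cases v <;> simp_all [ladderGraph, Edge, eq_comm, em]

theorem constructionOrderSpec_ladderGraph [Std.Trichotomous r]
    (s : LadderVertex α → LadderVertex α → Prop) [IsStrictOrder _ s]
    (hub_hub : s leftHub rightHub) (hub_key : ∀ i, s rightHub (key i))
    (key_left : ∀ i, s (key i) (left i)) (left_right : ∀ i, s (left i) (right i))
    (right_right : ∀ i j, r i j → s (right i) (right j)) :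
    ConstructionOrderSpec (ladderGraph r) s := by
  have hub_left (i : α) : s rightHub (left i) := trans_of s (hub_key i) (key_left i)
  have hub_right (i : α) : s rightHub (right i) := trans_of s (hub_left i) (left_right i)
  rintro (_ | _ | i | i | i) ⟨u, hu⟩
  · have hub_rel : u = leftHub ∨ s leftHub u := by
      cases u with
      | leftHub => exact Or.inl rfl
      | rightHub => exact Or.inr hub_hub
      | left i => exact Or.inr (trans_of s hub_hub (hub_left i))
      | right i => exact Or.inr (trans_of s hub_hub (hub_right i))
      | key i => exact Or.inr (trans_of s hub_hub (hub_key i))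
    rcases hub_rel with rfl | hub_rel
    · exact absurd hu (irrefl_of s _)
    · exact absurd hu (asymm_of s hub_rel)
  · exact ⟨leftHub, hub_hub, (dominatesOn_leftHub_rightHub r).of_compl_of_forall_rel
      (Set.forall_mem_range.2 hub_right)⟩
  · exact ⟨leftHub, trans_of s hub_hub (hub_left i),
      (dominatesOn_leftHub_left r i).of_compl_of_forall_rel (by simpa using left_right i)⟩
  · exact ⟨key i, trans_of s (key_left i) (left_right i),
      (dominatesOn_key_right r i).of_compl_of_forall_rel
        (Set.forall_mem_image.2 fun k => right_right i k)⟩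
  · exact ⟨rightHub, hub_key i,
      (dominatesOn_rightHub_key r i).of_compl_of_forall_rel (by simpa using key_left i)⟩

end Domination

/-- The positions in an economical construction order of a ladder whose rungs split into an initial
part `β` and a final part `γ`: the hubs, the keys and left ends of the rungs in `γ`, the rungs in
`β` with their keys, and the right ends of the rungs in `γ`. The finite factors are lifted to the
universe of `β` and `γ`, as `Ordinal.type_sum_lex` and `Ordinal.type_prod_lex` require. -/
abbrev Position (β γ : Type u) : Type u :=
  (ULift.{u} (Fin 2) ⊕ γ × ULift.{u} (Fin 2)) ⊕ (β × ULift.{u} (Fin 3) ⊕ γ)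

/-- The place of each vertex in the economical construction order. -/
def position {β γ : Type u} : LadderVertex (β ⊕ γ) → Position β γ
  | leftHub => .inl (.inl ⟨0⟩)
  | rightHub => .inl (.inl ⟨1⟩)
  | key (.inr c) => .inl (.inr (c, ⟨0⟩))
  | left (.inr c) => .inl (.inr (c, ⟨1⟩))
  | key (.inl b) => .inr (.inl (b, ⟨0⟩))
  | left (.inl b) => .inr (.inl (b, ⟨1⟩))
  | right (.inl b) => .inr (.inl (b, ⟨2⟩))
  | right (.inr c) => .inr (.inr c)

theorem position_injective {β γ : Type u} :
    Function.Injective (position : LadderVertex (β ⊕ γ) → Position β γ) := by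
  rintro (_ | _ | (_ | _) | (_ | _) | (_ | _)) (_ | _ | (_ | _) | (_ | _) | (_ | _)) <;>
    simp [position]

section UpperBound

variable {β γ : Type u} (r : β → β → Prop) (s : γ → γ → Prop)

/-- The lexicographic order of positions, given the orders `r` of `β` and `s` of `γ`. -/
def PositionLT : Position β γ → Position β γ → Prop :=
  Sum.Lex (Sum.Lex (· < ·) (Prod.Lex s (· < ·))) (Sum.Lex (Prod.Lex r (· < ·)) s)

/-- The economical construction order of the ladder with rungs `β` followed by `γ`. -/
def PositionOrder : LadderVertex (β ⊕ γ) → LadderVertex (β ⊕ γ) → Prop :=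
  position ⁻¹'o PositionLT r s

variable [IsWellOrder β r] [IsWellOrder γ s]

instance : IsWellOrder (Position β γ) (PositionLT r s) := by
  unfold PositionLT
  infer_instance

theorem type_positionLT :
    type (PositionLT r s) = (2 + 2 * type s) + (3 * type r + type s) := by
  simp [PositionLT, type_sum_lex, type_prod_lex]

/-- The embedding of the economical construction order into the order of positions. -/
def positionEmbedding : PositionOrder r s ↪r PositionLT r s :=
  RelEmbedding.preimage ⟨position, position_injective⟩ (PositionLT r s)

instance : IsWellOrder (LadderVertex (β ⊕ γ)) (PositionOrder r s) :=
  (positionEmbedding r s).isWellOrder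

theorem type_positionOrder_le :
    type (PositionOrder r s) ≤ (2 + 2 * type s) + (3 * type r + type s) :=
  (positionEmbedding r s).ordinal_type_le.trans_eq (type_positionLT r s)

theorem constructionOrderSpec_positionOrder :
    ConstructionOrderSpec (ladderGraph (Sum.Lex r s)) (PositionOrder r s) := by
  apply constructionOrderSpec_ladderGraph
  · simp [PositionOrder, position, PositionLT]
  · rintro (b | c) <;> simp [PositionOrder, position, PositionLT]
  · rintro (b | c) <;> simp [PositionOrder, position, PositionLT, Prod.lex_def]
  · rintro (b | c) <;> simp [PositionOrder, position, PositionLT, Prod.lex_def]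
  · rintro (b | c) (b' | c') <;>
      simp +contextual [PositionOrder, position, PositionLT, Prod.lex_def]

theorem isLeast_constructionTimes_ladderGraph
    (h : (2 + 2 * type s) + (3 * type r + type s) ≤ type r + type s) :
    IsLeast (constructionTimes (ladderGraph (Sum.Lex r s))) (type r + type s) := by
  have hmem : type (PositionOrder r s) ∈ constructionTimes (ladderGraph (Sum.Lex r s)) :=
    ⟨_, inferInstance, constructionOrderSpec_positionOrder r s, rfl⟩
  have hlower : type r + type s ∈ lowerBounds (constructionTimes (ladderGraph (Sum.Lex r s))) :=
    fun o ho => type_sum_lex r s ▸ type_le_of_mem_constructionTimes_ladderGraph _ ho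
  have hupper : type (PositionOrder r s) ≤ type r + type s :=
    (type_positionOrder_le r s).trans h
  exact ⟨hupper.antisymm (hlower hmem) ▸ hmem, hlower⟩

end UpperBound

end LadderVertex

theorem exists_isLeast_constructionTimes_of_lt_omega0 {lam : Ordinal.{u}} (h : lam < ω) :
    ∃ (V : Type u) (G : SimpleGraph V), IsLeast (constructionTimes G) lam := by
  have : Finite lam.ToType := by
    rw [← lt_aleph0_iff_finite, mk_toType]
    exact card_lt_aleph0.2 h
  exact ⟨lam.ToType, ⊤, by simpa using isLeast_constructionTimes_top (V := lam.ToType) (· < ·)⟩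

theorem exists_isLeast_constructionTimes_of_omega0_le {lam : Ordinal.{u}} (h : ω ≤ lam) :
    ∃ (V : Type u) (G : SimpleGraph V), IsLeast (constructionTimes G) lam := by
  obtain ⟨n, hn⟩ := lt_omega0.1 (mod_lt lam omega0_ne_zero)
  have hdecomp : ω * (lam / ω) + n = lam := hn ▸ div_add_mod lam ω
  have hq : lam / ω ≠ 0 := ((div_pos omega0_ne_zero).2 h).ne'
  have habsorb : (2 + 2 * n : Ordinal) + (3 * (ω * (lam / ω)) + n) = ω * (lam / ω) + n := by
    rw [← add_assoc]
    exact_mod_cast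
      congrArg (· + (n : Ordinal)) (natCast_add_natCast_mul_omega0_mul hq (2 + 2 * n) three_pos)
  have hladder := LadderVertex.isLeast_constructionTimes_ladderGraph
    (β := (ω * (lam / ω)).ToType) (γ := (n : Ordinal.{u}).ToType) (· < ·) (· < ·)
  simp only [type_toType, hdecomp] at hladder habsorb
  exact ⟨_, _, hladder habsorb.le⟩

theorem exists_graph_with_construction_time_general (lam : Ordinal.{u}) :
    ∃ (V : Type u) (G : SimpleGraph V), #V = lam.card ∧ Constructible G ∧
      IsLeast (constructionTimes G) lam := by
  obtain ⟨V, G, hG⟩ : ∃ (V : Type u) (G : SimpleGraph V), IsLeast (constructionTimes G) lam := by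
    rcases lt_or_ge lam ω with hfin | hinf
    · exact exists_isLeast_constructionTimes_of_lt_omega0 hfin
    · exact exists_isLeast_constructionTimes_of_omega0_le hinf
  exact ⟨V, G, mk_eq_card_of_mem_constructionTimes hG.1,
    constructible_of_mem_constructionTimes hG.1, hG⟩

theorem exists_graph_with_construction_time (lam : Ordinal.{0}) (h1 : 1 ≤ lam)
    (hcount : lam.card ≤ Cardinal.aleph0) :
    ∃ (V : Type) (G : SimpleGraph V), Countable V ∧ Constructible G ∧
      IsLeast (constructionTimes G) lam := by
  obtain ⟨V, G, hV, hG⟩ := exists_graph_with_construction_time_general lam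
  exact ⟨V, G, mk_le_aleph0_iff.1 (hV.trans_le hcount), hG⟩
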